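/- Let n ≥ 1, q = (q_1,...,q_n), and δ = (n, n-1, ..., 1). Define Q(q) = ∏_{i=1}^n q_i · ∏_{1≤i<j≤n}(q_i - q_j) · ∏_{1≤i≤j≤n}(1 + q_i q_j). Then Q(q) = Σ_{γ ∈ 𝒞} a_δ(q) s_γ(q), where a_δ(q) = ∏_i q_i ∏_{i<j}(q_i - q_j) and 𝒞 is the set of partitions with Frobenius arm lengths exceeding leg lengths by exactly 1. -/

import Mathlib

open Finset

/-- Complete homogeneous symmetric polynomial of degree `r` evaluated at `x`. -/
noncomputable def hpoly {σ : Type*} [Fintype σ] [DecidableEq σ] {R : Type*} [CommRing R]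
    (x : σ → R) (r : ℕ) : R :=
  ∑ d ∈ (Finset.univ : Finset (σ → Fin (r + 1))).filter (fun d => ∑ i, (d i : ℕ) = r),
    ∏ i, x i ^ ((d i : ℕ))

/-- `hpoly` with integer index, zero for negative degrees. -/
noncomputable def hpolyZ {σ : Type*} [Fintype σ] [DecidableEq σ] {R : Type*} [CommRing R]
    (x : σ → R) (k : ℤ) : R :=
  if 0 ≤ k then hpoly x k.toNat else 0

/-- A partition: weakly decreasing, eventually zero sequence of naturals (0-indexed parts,
so `parts 0` is the first part). -/
structure Partn where
  parts : ℕ → ℕ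
  antitone' : Antitone parts
  eventually_zero : ∃ N, ∀ i, N ≤ i → parts i = 0

/-- The conjugate partition: `conj p j` is the number of parts exceeding `j`
(the length of column `j+1`). -/
noncomputable def Partn.conj (p : Partn) (j : ℕ) : ℕ :=
  Nat.card {i : ℕ | j < p.parts i}

/-- Number of nonzero parts. -/
noncomputable def Partn.len (p : Partn) : ℕ :=
  Nat.card {i : ℕ | 0 < p.parts i}

/-- Membership in `𝒫₁ = 𝒞`: in Frobenius notation every arm length exceeds the
corresponding leg length by exactly 1 (armᵢ = partsᵢ - i - 1, legᵢ = conjᵢ - i - 1,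
0-indexed along the diagonal `i < parts i`). -/
def Partn.InC (p : Partn) : Prop :=
  ∀ i, i < p.parts i → p.parts i = p.conj i + 1

/-- Membership in `𝒫₋₁ = 𝒜` (conjugates of `𝒫₁`): every leg length exceeds the
corresponding arm length by exactly 1. -/
def Partn.InA (p : Partn) : Prop :=
  ∀ i, i < p.parts i → p.conj i = p.parts i + 1

/-- Schur polynomial in `n` variables via the Jacobi–Trudi determinant
`s_p = det(h_{p_i - i + j})_{1 ≤ i,j ≤ ℓ(p)}`; this vanishes when `ℓ(p) > n`. -/
noncomputable def schur {n : ℕ} {R : Type*} [CommRing R] (x : Fin n → R) (p : Partn) : R :=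
  Matrix.det (Matrix.of fun i j : Fin p.len =>
    hpolyZ x ((p.parts i : ℤ) - (i : ℕ) + (j : ℕ)))

/-- Skew Schur polynomial `s_{lam/mu}` in `n` variables via the Jacobi–Trudi determinant
`det(h_{lam_i - mu_j - i + j})`; this vanishes unless `mu ⊆ lam`. -/
noncomputable def skewSchur {n : ℕ} {R : Type*} [CommRing R] (x : Fin n → R)
    (lam mu : Partn) : R :=
  Matrix.det (Matrix.of fun i j : Fin (max lam.len mu.len) =>
    hpolyZ x ((lam.parts i : ℤ) - (mu.parts j : ℕ) - (i : ℕ) + (j : ℕ)))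


open Finset

theorem Partn.lt_conj_iff (p : Partn) (i j : ℕ) : i < p.conj j ↔ j < p.parts i := by
  have hex : ∃ c, p.parts c ≤ j := by
    obtain ⟨N, hN⟩ := p.eventually_zero
    exact ⟨N, by rw [hN N le_rfl]; exact Nat.zero_le _⟩
  classical
  have hS : {i : ℕ | j < p.parts i} = Set.Iio (Nat.find hex) := by
    ext i
    simp only [Set.mem_ofPred_eq, Set.mem_Iio, Nat.lt_find_iff, not_le]
    constructor
    · intro h m hm
      exact lt_of_lt_of_le h (p.antitone' hm)
    · intro h
      exact h i le_rfl
  have hc : p.conj j = Nat.find hex := by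
    unfold Partn.conj
    rw [hS]
    simp
  rw [hc, ← Set.mem_Iio, ← hS]
  rfl

theorem Partn.conj_eq (p : Partn) (j c : ℕ) (h : ∀ i, i < c ↔ j < p.parts i) :
    p.conj j = c := by
  have h1 := p.lt_conj_iff c j
  have h2 := p.lt_conj_iff (p.conj j) j
  have h3 := h c
  have h4 := h (p.conj j)
  rcases lt_trichotomy (p.conj j) c with h5 | h5 | h5
  · exact absurd (h2.2 (h4.1 h5)) (lt_irrefl _)
  · exact h5
  · exact absurd (h3.2 (h1.1 h5)) (lt_irrefl _)

theorem Partn.len_eq_conj (p : Partn) : p.len = p.conj 0 := rfl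

theorem Partn.lt_len_iff (p : Partn) (i : ℕ) : i < p.len ↔ 0 < p.parts i :=
  p.lt_conj_iff i 0

theorem Partn.ext' {p r : Partn} (h : ∀ i, p.parts i = r.parts i) : p = r := by
  cases p; cases r
  simp only [Partn.mk.injEq]
  exact funext h

/-- The empty partition. -/
def emptyP : Partn := ⟨fun _ => 0, fun _ _ _ => le_rfl, ⟨0, fun _ _ => rfl⟩⟩

/-- Add a hook with leg length `m` and arm length `m+1`. -/
def hookP (m : ℕ) (p : Partn) : Partn where
  parts k := Nat.casesOn k (max (m + 2) (p.parts 0 + 1))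
    (fun k => if k < m then p.parts k + 1 else 0)
  antitone' := by
    apply antitone_nat_of_succ_le
    intro k
    rcases k with _ | k
    · show (if 0 < m then p.parts 0 + 1 else 0) ≤ max (m + 2) (p.parts 0 + 1)
      split_ifs
      · exact le_max_right _ _
      · exact Nat.zero_le _
    · show (if k + 1 < m then p.parts (k+1) + 1 else 0) ≤ (if k < m then p.parts k + 1 else 0)
      have := p.antitone' (Nat.le_succ k)
      simp only [Nat.succ_eq_add_one] at this
      split_ifs <;> omega
  eventually_zero := ⟨m + 1, fun i hi => by
    rcases i with _ | i
    · omega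
    · exact if_neg (by omega)⟩

theorem hookP_zero (m : ℕ) (p : Partn) : (hookP m p).parts 0 = max (m + 2) (p.parts 0 + 1) := rfl
theorem hookP_succ (m : ℕ) (p : Partn) (k : ℕ) :
    (hookP m p).parts (k+1) = if k < m then p.parts k + 1 else 0 := rfl

open Classical in
/-- The partitions in `𝒞` with at most `m` parts. -/
noncomputable def CP : ℕ → Finset Partn
  | 0 => {emptyP}
  | m + 1 => CP m ∪ (CP m).image (hookP m)

theorem Partn.parts_zero_le {p : Partn} (hp : p.InC) : p.parts 0 ≤ p.len + 1 := by
  rcases Nat.eq_zero_or_pos (p.parts 0) with h | h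
  · omega
  · rw [hp 0 h, Partn.len_eq_conj]

theorem hookP_inC {m : ℕ} {p : Partn} (hp : p.InC) (hl : p.len ≤ m) :
    (hookP m p).InC ∧ (hookP m p).len = m + 1 := by
  have h0 := Partn.parts_zero_le hp
  have hlen : (hookP m p).conj 0 = m + 1 := by
    apply Partn.conj_eq
    intro i
    rcases i with _ | i
    · rw [hookP_zero]; omega
    · rw [hookP_succ]; split_ifs <;> omega
  refine ⟨?_, hlen⟩
  intro i hi
  rcases i with _ | i
  · rw [hlen, hookP_zero]; omega
  · rw [hookP_succ] at hi ⊢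
    by_cases him : i < m
    · rw [if_pos him] at hi ⊢
      have h1 := hp i (by omega)
      have : (hookP m p).conj (i + 1) = p.conj i + 1 := by
        apply Partn.conj_eq
        intro k
        rcases k with _ | k
        · rw [hookP_zero]; omega
        · rw [hookP_succ]
          have h2 := p.lt_conj_iff k i
          have h3 := p.lt_len_iff k
          split_ifs <;> omega
      omega
    · rw [if_neg him] at hi; omega

/-- Remove the first hook. -/
def unhookP (p : Partn) : Partn where
  parts k := p.parts (k + 1) - 1
  antitone' := fun a b hab => Nat.sub_le_sub_right (p.antitone' (by omega)) 1
  eventually_zero := by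
    obtain ⟨N, hN⟩ := p.eventually_zero
    exact ⟨N, fun i hi => by rw [hN (i+1) (by omega)]⟩

theorem unhookP_parts (p : Partn) (k : ℕ) : (unhookP p).parts k = p.parts (k + 1) - 1 := rfl

theorem unhookP_inC {m : ℕ} {p : Partn} (hp : p.InC) (hl : p.len = m + 1) :
    (unhookP p).InC ∧ (unhookP p).len ≤ m ∧ hookP m (unhookP p) = p := by
  refine ⟨?_, ?_, ?_⟩
  · intro i hi
    rw [unhookP_parts] at hi ⊢
    have h1 := hp (i + 1) (by omega)
    have h0 := p.antitone' (Nat.zero_le (i+1))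
    have : (unhookP p).conj i = p.conj (i + 1) - 1 := by
      apply Partn.conj_eq
      intro k
      rw [unhookP_parts]
      have := p.lt_conj_iff (k+1) (i+1)
      omega
    omega
  · by_contra h
    have h1 := (unhookP p).lt_len_iff m
    rw [unhookP_parts] at h1
    have h2 := p.lt_len_iff (m+1)
    omega
  · apply Partn.ext'
    have h1 : p.parts 0 = m + 2 := by
      have := p.lt_len_iff 0
      rw [hp 0 (by omega), ← Partn.len_eq_conj, hl]
    intro i
    rcases i with _ | i
    · rw [hookP_zero, unhookP_parts]
      have := p.antitone' (Nat.zero_le 1)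
      simp only [zero_add]
      omega
    · rw [hookP_succ, unhookP_parts]
      have := p.lt_len_iff (i+1)
      split_ifs <;> omega

theorem mem_CP (m : ℕ) : ∀ p : Partn, p ∈ CP m ↔ p.InC ∧ p.len ≤ m := by
  induction m with
  | zero =>
    intro p
    simp only [CP, Finset.mem_singleton]
    constructor
    · rintro rfl
      refine ⟨fun i hi => absurd hi (Nat.not_lt_zero _), ?_⟩
      have := emptyP.lt_len_iff 0
      have h : emptyP.parts 0 = 0 := rfl
      omega
    · rintro ⟨_, h⟩
      apply Partn.ext'
      intro i
      have := p.lt_len_iff i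
      show _ = 0
      omega
  | succ m ih =>
    intro p
    simp only [CP, Finset.mem_union, Finset.mem_image]
    constructor
    · rintro (h | ⟨r, hr, rfl⟩)
      · rw [ih] at h
        exact ⟨h.1, by omega⟩
      · rw [ih] at hr
        have := hookP_inC hr.1 hr.2
        exact ⟨this.1, by omega⟩
    · rintro ⟨h1, h2⟩
      rcases Nat.lt_or_ge m p.len with h | h
      · right
        have := unhookP_inC h1 (show p.len = m + 1 by omega)
        exact ⟨unhookP p, (ih _).2 ⟨this.1, this.2.1⟩, this.2.2⟩
      · left
        exact (ih p).2 ⟨h1, h⟩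

theorem sum_CP_succ {A : Type*} [AddCommMonoid A] (m : ℕ) (G : Partn → A) :
    ∑ p ∈ CP (m + 1), G p = ∑ p ∈ CP m, G p + ∑ p ∈ CP m, G (hookP m p) := by
  classical
  simp only [CP]
  rw [Finset.sum_union, Finset.sum_image]
  · intro p hp r hr h
    simp only [Finset.mem_coe, mem_CP] at hp hr
    apply Partn.ext'
    intro i
    have h1 : (hookP m p).parts (i+1) = (hookP m r).parts (i+1) := by rw [h]
    rw [hookP_succ, hookP_succ] at h1
    have h2 := p.lt_len_iff i
    have h3 := r.lt_len_iff i
    split_ifs at h1 <;> omega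
  · rw [Finset.disjoint_left]
    intro p hp hq
    rw [Finset.mem_image] at hq
    obtain ⟨r, hr, rfl⟩ := hq
    rw [mem_CP] at hp hr
    have := hookP_inC hr.1 hr.2
    omega

theorem alt_snoc {R M N : Type*} [CommRing R] [AddCommGroup M] [Module R M] [AddCommGroup N]
    [Module R N] (m : ℕ) (D : M [⋀^Fin (m+1)]→ₗ[R] N) (u : Fin m → M) (a : M) :
    D (Fin.snoc (α := fun _ => M) u a) = (-1 : R) ^ m • D.curryLeft a u := by
  have h : (Fin.snoc (α := fun _ => M) u a : Fin (m+1) → M) =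
      (Fin.cons (α := fun _ => M) a u : Fin (m+1) → M) ∘ (finRotate (m+1)) := by
    rw [Fin.snoc_eq_cons_rotate]; rfl
  rw [h, AlternatingMap.map_perm, sign_finRotate, AlternatingMap.curryLeft_apply_apply]
  rcases Nat.even_or_odd m with hm | hm
  · simp [hm.neg_one_pow]; rfl
  · simp [hm.neg_one_pow]; rfl

theorem alt_expand {R M N : Type*} [CommRing R] [AddCommGroup M] [Module R M] [AddCommGroup N]
    [Module R N] (e : ℤ → M) (m : ℕ) : ∀ (D : M [⋀^Fin m]→ₗ[R] N),
    D (fun j => e (-((j:ℕ) + 1 : ℤ)) + (-1 : R) ^ (j : ℕ) • e ((j : ℕ) + 1)) =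
      ∑ p ∈ CP m, D (fun k => e ((p.parts k : ℤ) - 1 - (k : ℕ))) := by
  induction m with
  | zero =>
    intro D
    simp only [CP, Finset.sum_singleton]
    congr 1
    ext i
    exact i.elim0
  | succ m ih =>
    intro D
    have h1 : (fun j : Fin (m+1) => e (-((j:ℕ) + 1 : ℤ)) + (-1 : R) ^ (j : ℕ) • e ((j : ℕ) + 1)) =
      Fin.snoc (α := fun _ => M)
        (fun j : Fin m => e (-((j:ℕ) + 1 : ℤ)) + (-1 : R) ^ (j : ℕ) • e ((j : ℕ) + 1))
        (e (-((m:ℕ) + 1 : ℤ)) + (-1 : R) ^ m • e ((m : ℕ) + 1)) := by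
      funext j
      refine Fin.lastCases ?_ (fun j => ?_) j
      · simp
      · simp
    rw [h1, alt_snoc, map_add, map_smul, AlternatingMap.add_apply, AlternatingMap.smul_apply,
      ih, ih, smul_add, smul_smul, ← mul_pow, sum_CP_succ]
    simp only [mul_neg, mul_one, neg_neg, one_pow, one_smul]
    rw [Finset.smul_sum]
    congr 1
    · apply Finset.sum_congr rfl
      intro p hp
      rw [← alt_snoc]
      congr 1
      funext j
      refine Fin.lastCases ?_ (fun j => ?_) j
      · have : p.parts m = 0 := by
          have := p.lt_len_iff m
          have := ((mem_CP _ _).1 hp).2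
          omega
        simp [this]
        congr 1
      · simp
    · apply Finset.sum_congr rfl
      intro p hp
      rw [AlternatingMap.curryLeft_apply_apply]
      have h2 := ((mem_CP _ _).1 hp)
      have h3 := Partn.parts_zero_le h2.1
      congr 1
      funext j
      refine Fin.cases ?_ (fun j => ?_) j
      · show e _ = e _
        congr 1
        simp only [Fin.val_zero, hookP_zero]
        rw [max_eq_left (by omega)]
        push_cast
        ring
      · show e _ = e _
        congr 1
        rw [Fin.val_succ, hookP_succ, if_pos j.2]
        push_cast
        ring

theorem chain_coeff (R : Type*) [CommRing R] (j : ℕ) : ∃ c : ℕ → R, c j = 1 ∧ (∀ k, j < k → c k = 0) ∧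
    ∀ (x : R) (N : ℕ), j ≤ N → x ^ (N - j) + (-1) ^ j * x ^ (N + j + 2) =
      (1 + x ^ 2) * ∑ k ∈ Finset.range (N + 1), c k * ((1 - x ^ 2) ^ k * x ^ (N - k)) := by
  induction j using Nat.twoStepInduction with
  | zero =>
    refine ⟨fun k => if k = 0 then 1 else 0, by simp, fun k hk => by simp; omega, ?_⟩
    intro x N _
    simp
    ring
  | one =>
    refine ⟨fun k => if k = 1 then 1 else 0, by simp, fun k hk => by simp; omega, ?_⟩
    intro x N hN
    obtain ⟨N, rfl⟩ := Nat.exists_eq_add_of_le' hN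
    simp
    ring
  | more j ih ih' =>
    obtain ⟨c, hc1, hc0, hc⟩ := ih
    obtain ⟨d, hd1, hd0, hd⟩ := ih'
    refine ⟨fun k => c k + (if k = 0 then 0 else d (k - 1)), ?_, ?_, ?_⟩
    · simp [hd1, hc0 (j+2) (by omega)]
    · intro k hk
      simp [hc0 k (by omega), hd0 (k-1) (by omega)]
    · intro x N hN
      obtain ⟨N, rfl⟩ := Nat.exists_eq_add_of_le hN
      have h1 := hc x (j + 2 + N) (by omega)
      have h2 := hd x (j + 1 + N) (by omega)
      simp only [add_mul, Finset.sum_add_distrib, mul_add]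
      rw [add_mul] at h1
      have h3 : ∑ k ∈ Finset.range (j + 2 + N + 1), (if k = 0 then 0 else d (k - 1)) *
          ((1 - x ^ 2) ^ k * x ^ (j + 2 + N - k)) = (1 - x ^ 2) *
          ∑ k ∈ Finset.range (j + 1 + N + 1), d k * ((1 - x ^ 2) ^ k * x ^ (j + 1 + N - k)) := by
        rw [show j + 2 + N + 1 = (j + 1 + N + 1) + 1 by ring, Finset.sum_range_succ', Finset.mul_sum]
        simp only [Nat.add_eq_zero_iff, one_ne_zero, and_false, if_false, if_true, zero_mul, add_zero]
        apply Finset.sum_congr rfl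
        intro k hk
        rw [show j + 2 + N - (k + 1) = j + 1 + N - k by omega, Nat.add_sub_cancel]
        ring
      rw [h3]
      have h4 : (1 + x ^ 2) * ((1 - x ^ 2) *
          ∑ k ∈ Finset.range (j + 1 + N + 1), d k * ((1 - x ^ 2) ^ k * x ^ (j + 1 + N - k))) =
          (1 - x^2) * (x ^ (j + 1 + N - (j + 1)) + (-1) ^ (j + 1) * x ^ (j + 1 + N + (j + 1) + 2)) := by
        rw [h2]; ring
      have h5 := h4
      rw [add_mul] at h5
      rw [add_add_add_comm, ← h1, h5]
      rw [show j + 2 + N - j = N + 2 by omega, show j + 1 + N - (j + 1) = N by omega,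
        show j + 2 + N - (j + 2) = N by omega]
      ring

theorem denom_det {R : Type*} [CommRing R] {n : ℕ} (q : Fin n → R) :
    Matrix.det (Matrix.of fun i j : Fin n =>
      q i ^ (n - 1 - (j : ℕ)) + (-1) ^ (j : ℕ) * q i ^ (n - 1 + j + 2)) =
      (∏ i : Fin n, (1 + q i ^ 2)) *
        ∏ i : Fin n, ∏ j ∈ Finset.univ.filter (fun j => i < j), ((q i - q j) * (1 + q i * q j)) := by
  choose c hc1 hc0 hc using chain_coeff R
  have h : (Matrix.of fun i j : Fin n =>
      q i ^ (n - 1 - (j : ℕ)) + (-1) ^ (j : ℕ) * q i ^ (n - 1 + j + 2)) =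
      Matrix.diagonal (fun i => 1 + q i ^ 2) *
        (Matrix.projVandermonde (fun i => 1 - q i ^ 2) q *
          Matrix.of fun k j : Fin n => c j k) := by
    ext i j
    rw [Matrix.diagonal_mul, Matrix.mul_apply, Matrix.of_apply, hc j (q i) (n - 1) (by omega)]
    congr 1
    have hn : n - 1 + 1 = n := by have := i.2; omega
    rw [hn, ← Fin.sum_univ_eq_sum_range
      (fun k => c j k * ((1 - q i ^ 2) ^ k * q i ^ (n - 1 - k)))]
    apply Finset.sum_congr rfl
    intro k _
    rw [Matrix.projVandermonde_apply, Matrix.of_apply, Fin.val_rev,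
      show n - ((k : ℕ) + 1) = n - 1 - (k : ℕ) by omega]
    ring
  rw [h, Matrix.det_mul, Matrix.det_mul, Matrix.det_diagonal, Matrix.det_projVandermonde]
  have hC : (Matrix.of fun k j : Fin n => c j k).det = 1 := by
    rw [Matrix.det_of_isUpperTriangular]
    · simp [hc1]
    · intro i j hij
      exact hc0 _ _ hij
  rw [hC, mul_one]
  congr 1
  apply Finset.prod_congr rfl
  intro i _
  apply Finset.prod_congr
  · ext j; simp
  · intro j _
    ring

theorem vander_det {R : Type*} [CommRing R] {n : ℕ} (q : Fin n → R) :
    Matrix.det (Matrix.of fun i j : Fin n => q i ^ (n - 1 - (j : ℕ))) =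
        ∏ i : Fin n, ∏ j ∈ Finset.univ.filter (fun j => i < j), (q i - q j) := by
  have := Matrix.det_projVandermonde (fun _ => (1 : R)) q
  have h : (Matrix.of fun i j : Fin n => q i ^ (n - 1 - (j : ℕ))) =
    Matrix.projVandermonde (fun _ => (1 : R)) q := by
    ext i j
    rw [Matrix.projVandermonde_apply, Matrix.of_apply, Fin.val_rev,
      show n - ((j : ℕ) + 1) = n - 1 - j by omega]
    simp
  rw [h, this]
  apply Finset.prod_congr rfl
  intro i _
  apply Finset.prod_congr
  · ext j; simp
  · intro j _
    ring

/-- Generating series of the complete homogeneous polynomials. -/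
noncomputable def Hs {R : Type*} [CommRing R] {n : ℕ} (x : Fin n → R) : PowerSeries R :=
  ∏ i, PowerSeries.mk (fun k => x i ^ k)

theorem coeff_Hs {R : Type*} [CommRing R] {n : ℕ} (x : Fin n → R) (r : ℕ) :
    PowerSeries.coeff r (Hs x) = hpoly x r := by
  unfold Hs hpoly
  rw [PowerSeries.coeff_prod]
  simp only [PowerSeries.coeff_mk]
  symm
  refine Finset.sum_bij' (fun d _ => Finsupp.equivFunOnFinite.symm (fun i => (d i : ℕ)))
    (fun l _ => fun i => Fin.ofNat (r+1) (l i)) ?_ ?_ ?_ ?_ ?_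
  · intro d hd
    simp only [Finset.mem_filter, Finset.mem_univ, true_and] at hd
    simp [Finset.mem_finsuppAntidiag, hd]
  · intro l hl
    simp only [Finset.mem_finsuppAntidiag] at hl
    simp only [Finset.mem_filter, Finset.mem_univ, true_and]
    refine Eq.trans ?_ hl.1
    apply Finset.sum_congr rfl
    intro i hi
    simp only [Fin.val_ofNat]
    apply Nat.mod_eq_of_lt
    have h9 : ∑ i, l i = r := hl.1
    have := Finset.single_le_sum (f := fun i => l i) (fun _ _ => Nat.zero_le _) hi
    omega
  · intro d hd
    funext i
    ext
    simp only [Finsupp.equivFunOnFinite_symm_apply_apply, Fin.val_ofNat]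
    exact Nat.mod_eq_of_lt (d i).2
  · intro l hl
    simp only [Finset.mem_finsuppAntidiag] at hl
    ext i
    simp only [Finsupp.equivFunOnFinite_symm_apply_apply, Fin.val_ofNat]
    apply Nat.mod_eq_of_lt
    have h9 : ∑ i, l i = r := hl.1
    have := Finset.single_le_sum (f := fun i => l i) (fun _ _ => Nat.zero_le _) (Finset.mem_univ i)
    omega
  · intro d hd
    simp

theorem geom_mul {R : Type*} [CommRing R] (a : R) :
    (1 - PowerSeries.C a * PowerSeries.X) * PowerSeries.mk (fun k => a ^ k) = 1 := by
  ext k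
  rcases k with _ | k
  · simp [sub_mul, mul_assoc]
  · rw [sub_mul, one_mul, map_sub, mul_assoc, PowerSeries.coeff_C_mul,
      PowerSeries.coeff_succ_X_mul]
    simp [PowerSeries.coeff_one, pow_succ']

/-- The product of `1 - x_l t` over `l ∈ s`, as a polynomial. -/
noncomputable def Es {R : Type*} [CommRing R] {n : ℕ} (x : Fin n → R) (s : Finset (Fin n)) :
    Polynomial R := ∏ l ∈ s, (1 - Polynomial.C (x l) * Polynomial.X)

theorem Es_coeff_eq_zero {R : Type*} [CommRing R] {n : ℕ} (x : Fin n → R) (s : Finset (Fin n))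
    (k : ℕ) (hk : s.card < k) : (Es x s).coeff k = 0 := by
  apply Polynomial.coeff_eq_zero_of_natDegree_lt
  refine lt_of_le_of_lt ?_ hk
  unfold Es
  refine (Polynomial.natDegree_prod_le _ _).trans ?_
  rw [Finset.card_eq_sum_ones]
  apply Finset.sum_le_sum
  intro i _
  compute_degree

theorem Es_coeff_zero {R : Type*} [CommRing R] {n : ℕ} (x : Fin n → R) (s : Finset (Fin n)) :
    (Es x s).coeff 0 = 1 := by
  unfold Es
  rw [Polynomial.coeff_zero_prod]
  simp

theorem Es_coe {R : Type*} [CommRing R] {n : ℕ} (x : Fin n → R) (s : Finset (Fin n)) :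
    ((Es x s : Polynomial R) : PowerSeries R) =
      ∏ l ∈ s, (1 - PowerSeries.C (x l) * PowerSeries.X) := by
  unfold Es
  rw [← Polynomial.coeToPowerSeries.ringHom_apply, map_prod]
  simp

theorem Es_mul_Hs {R : Type*} [CommRing R] {n : ℕ} (x : Fin n → R) :
    (Es x Finset.univ : PowerSeries R) * Hs x = 1 := by
  rw [Es_coe, Hs, ← Finset.prod_mul_distrib]
  exact Finset.prod_eq_one fun i _ => geom_mul _

theorem Es_erase_mul_Hs {R : Type*} [CommRing R] {n : ℕ} (x : Fin n → R) (i : Fin n) :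
    (Es x (Finset.univ.erase i) : PowerSeries R) * Hs x = PowerSeries.mk (fun k => x i ^ k) := by
  rw [Es_coe, Hs, ← Finset.mul_prod_erase Finset.univ _ (Finset.mem_univ i), mul_left_comm,
    ← Finset.prod_mul_distrib, Finset.prod_eq_one fun i _ => geom_mul _, mul_one]

theorem coeff_mul_Hs {R : Type*} [CommRing R] {n : ℕ} (x : Fin n → R) (P : Polynomial R) (N m : ℕ)
    (hP : ∀ k, N ≤ k → P.coeff k = 0) :
    PowerSeries.coeff m ((P : PowerSeries R) * Hs x) =
      ∑ k ∈ Finset.range N, P.coeff k * hpolyZ x ((m : ℤ) - k) := by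
  rw [PowerSeries.coeff_mul, Finset.Nat.sum_antidiagonal_eq_sum_range_succ_mk]
  have h1 : ∑ k ∈ Finset.range (m + 1), (PowerSeries.coeff k (P : PowerSeries R)) *
      PowerSeries.coeff (m - k) (Hs x) =
      ∑ k ∈ Finset.range (m + 1 + N), P.coeff k * hpolyZ x ((m : ℤ) - k) := by
    rw [Finset.sum_range_add _ (m + 1) N, Finset.sum_eq_zero (s := Finset.range N), add_zero]
    · apply Finset.sum_congr rfl
      intro k hk
      have hk := Finset.mem_range.1 hk
      rw [coeff_Hs, hpolyZ, if_pos (by omega), Polynomial.coeff_coe]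
      congr 2
      omega
    · intro k _
      rw [hpolyZ, if_neg (by push_cast; omega), mul_zero]
  rw [h1, add_comm, Finset.sum_range_add, Finset.sum_eq_zero (s := Finset.range (m+1)), add_zero]
  intro k _
  rw [hP _ (by omega), zero_mul]

theorem schur_eq_zero {R : Type*} [CommRing R] {n : ℕ} (x : Fin n → R) (p : Partn)
    (h : n < p.len) : schur x p = 0 := by
  unfold schur
  set L := p.len with hL
  obtain ⟨M, hM⟩ : ∃ M, L = M + 1 := ⟨L - 1, by omega⟩
  set A := (Matrix.of fun i j : Fin L => hpolyZ x ((p.parts i : ℤ) - (i : ℕ) + (j : ℕ))) with hA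
  -- the combination of columns given by `Es`
  have hv : A.mulVec (fun j => (Es x Finset.univ).coeff (M - j)) = 0 := by
    funext i
    have hp := (p.lt_len_iff i).1 i.2
    have h1 := coeff_mul_Hs x (Es x Finset.univ) (M + 1) (p.parts i - 1 + (M - i) + 1)
      (fun k hk => Es_coeff_eq_zero _ _ _ (by simp; omega))
    rw [Es_mul_Hs, PowerSeries.coeff_one, if_neg (by omega)] at h1
    rw [Matrix.mulVec, dotProduct, Pi.zero_apply, h1, ← Finset.sum_range_reflect, ← hM,
      ← Fin.sum_univ_eq_sum_range (fun j => (Es x Finset.univ).coeff (L - 1 - j) *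
        hpolyZ x (((p.parts i - 1 + (M - i) + 1 : ℕ) : ℤ) - ((L - 1 - j : ℕ) : ℤ)))]
    apply Finset.sum_congr rfl
    intro j _
    rw [mul_comm, hA, Matrix.of_apply, show L - 1 = M by omega]
    congr 2
    omega
  have h2 : A.det • (fun j : Fin L => (Es x Finset.univ).coeff (M - j)) = 0 := by
    have := congrArg (fun v => A.adjugate.mulVec v) hv
    simpa [Matrix.mulVec_mulVec, Matrix.adjugate_mul, Matrix.smul_mulVec] using this
  have h3 := congrFun h2 ⟨M, by omega⟩
  simpa [Es_coeff_zero] using h3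

theorem schur_extend {R : Type*} [CommRing R] {n : ℕ} (x : Fin n → R) (p : Partn)
    (N : ℕ) (h : p.len ≤ N) : schur x p = Matrix.det (Matrix.of fun i j : Fin N =>
      hpolyZ x ((p.parts i : ℤ) - (i : ℕ) + (j : ℕ))) := by
  have hh0 : hpolyZ x 0 = 1 := by
    rw [hpolyZ, if_pos le_rfl, ← coeff_Hs, Hs]
    simp [PowerSeries.coeff_zero_eq_constantCoeff]
  obtain ⟨d, rfl⟩ := Nat.exists_eq_add_of_le h
  rw [← Matrix.det_reindex_self (finSumFinEquiv (m := p.len) (n := d)).symm]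
  set B := Matrix.reindex (finSumFinEquiv (m := p.len) (n := d)).symm
    (finSumFinEquiv (m := p.len) (n := d)).symm (Matrix.of fun i j : Fin (p.len + d) =>
      hpolyZ x ((p.parts i : ℤ) - (i : ℕ) + (j : ℕ))) with hB
  rw [← Matrix.fromBlocks_toBlocks B]
  have hz : ∀ i : Fin d, p.parts (p.len + i) = 0 := by
    intro i
    have := p.lt_len_iff (p.len + i)
    omega
  have h21 : B.toBlocks₂₁ = 0 := by
    ext i j
    simp [hB, Matrix.toBlocks₂₁, hz]
    rw [hpolyZ, if_neg (by omega)]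
  have h22 : B.toBlocks₂₂.det = 1 := by
    rw [Matrix.det_of_isUpperTriangular]
    · apply Finset.prod_eq_one
      intro i _
      simp [hB, Matrix.toBlocks₂₂, hz, hh0]
    · intro i j hij
      have : (j : ℕ) < i := hij
      simp [hB, Matrix.toBlocks₂₂, hz]
      rw [hpolyZ, if_neg (by omega)]
  rw [h21, Matrix.det_fromBlocks_zero₂₁, h22, mul_one, schur]
  congr 1

theorem bialternant {R : Type*} [CommRing R] {n : ℕ} (x : Fin n → R) (p : Partn)
    (h : p.len ≤ n) : Matrix.det (Matrix.of fun k i : Fin n => x i ^ (p.parts k + (n - 1 - k))) =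
      schur x p * Matrix.det (Matrix.of fun j i : Fin n =>
        (Es x (Finset.univ.erase i)).coeff (n - 1 - j)) := by
  rw [schur_extend x p n h, ← Matrix.det_mul]
  congr 1
  ext k i
  have h1 := coeff_mul_Hs x (Es x (Finset.univ.erase i)) n (p.parts k + (n - 1 - k))
    (fun k hk => Es_coeff_eq_zero _ _ _ (by have := i.2; simp; omega))
  rw [Es_erase_mul_Hs, PowerSeries.coeff_mk] at h1
  rw [Matrix.of_apply, h1, ← Finset.sum_range_reflect, Matrix.mul_apply,
    ← Fin.sum_univ_eq_sum_range (fun j => (Es x (Finset.univ.erase i)).coeff (n - 1 - j) *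
      hpolyZ x (((p.parts k + (n - 1 - k) : ℕ) : ℤ) - ((n - 1 - j : ℕ) : ℤ)))]
  apply Finset.sum_congr rfl
  intro j _
  rw [mul_comm, Matrix.of_apply, Matrix.of_apply]
  congr 2
  omega

theorem Es_det {R : Type*} [CommRing R] {n : ℕ} (x : Fin n → R) :
    Matrix.det (Matrix.of fun j i : Fin n =>
        (Es x (Finset.univ.erase i)).coeff (n - 1 - j)) =
      ∏ i : Fin n, ∏ j ∈ Finset.univ.filter (fun j => i < j), (x i - x j) := by
  have hl : emptyP.len = 0 := emptyP.conj_eq 0 0 (fun i => by simp [emptyP])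
  have h := bialternant x emptyP (by omega)
  have hs : schur x emptyP = 1 := by
    unfold schur
    have : IsEmpty (Fin emptyP.len) := by rw [hl]; infer_instance
    exact Matrix.det_isEmpty
  rw [hs, one_mul] at h
  rw [← h, ← vander_det, ← Matrix.det_transpose]
  congr 1
  ext i j
  simp [emptyP]

theorem prod_split {R : Type*} [CommRing R] {n : ℕ} (q : Fin n → R) :
    (∏ i : Fin n, ∏ j ∈ Finset.univ.filter (fun j => i ≤ j), (1 + q i * q j)) =
    (∏ i : Fin n, (1 + q i ^ 2)) *
      ∏ i : Fin n, ∏ j ∈ Finset.univ.filter (fun j => i < j), (1 + q i * q j) := by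
  rw [← Finset.prod_mul_distrib]
  apply Finset.prod_congr rfl
  intro i _
  have : Finset.univ.filter (fun j => i ≤ j) = insert i (Finset.univ.filter (fun j => i < j)) := by
    ext j
    simp [le_iff_eq_or_lt, eq_comm]
  rw [this, Finset.prod_insert (by simp)]
  ring

theorem main_sum {R : Type*} [CommRing R] {n : ℕ} (q : Fin n → R) :
    (∏ i : Fin n, ∏ j ∈ Finset.univ.filter (fun j => i < j), (q i - q j)) *
      (∏ i : Fin n, ∏ j ∈ Finset.univ.filter (fun j => i ≤ j), (1 + q i * q j)) =
    ∑ p ∈ CP n, (∏ i : Fin n, ∏ j ∈ Finset.univ.filter (fun j => i < j), (q i - q j)) *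
        schur q p := by
  have h := alt_expand (R := R) (fun z : ℤ => fun i : Fin n => q i ^ ((n : ℤ) + z).toNat) n
    Matrix.detRowAlternating
  have h1 : (Matrix.detRowAlternating : (Fin n → R) [⋀^Fin n]→ₗ[R] R)
      (fun j : Fin n => (fun i : Fin n => q i ^ ((n : ℤ) + (-((j:ℕ) + 1 : ℤ))).toNat) +
        (-1 : R) ^ (j : ℕ) • (fun i : Fin n => q i ^ ((n : ℤ) + ((j : ℕ) + 1)).toNat)) =
      Matrix.det (Matrix.of fun i j : Fin n =>
      q i ^ (n - 1 - (j : ℕ)) + (-1) ^ (j : ℕ) * q i ^ (n - 1 + j + 2)) := by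
    rw [← Matrix.det_transpose]
    show Matrix.det _ = Matrix.det _
    congr 1
    ext j i
    rw [Matrix.transpose_apply, Matrix.of_apply, Pi.add_apply, Pi.smul_apply, smul_eq_mul]
    congr 3 <;> omega
  rw [h1, denom_det] at h
  simp only [Finset.prod_mul_distrib] at h
  rw [prod_split, mul_left_comm, h]
  apply Finset.sum_congr rfl
  intro p hp
  rw [← Es_det, mul_comm, ← bialternant q p ((mem_CP _ _).1 hp).2]
  show Matrix.det _ = Matrix.det _
  congr 1
  ext k i
  rw [Matrix.of_apply]
  congr 1
  omega

/-- `Q(q) = ∏ q_i ∏_{i<j}(q_i - q_j) ∏_{i≤j}(1 + q_i q_j) = Σ_{γ ∈ 𝒞} a_δ(q) s_γ(q)`,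
where `a_δ(q) = ∏ q_i ∏_{i<j}(q_i - q_j)` and `𝒞 = 𝒫₁`. -/
theorem Q_eq_sum_adelta_schur {R : Type*} [CommRing R] {n : ℕ} (hn : 1 ≤ n)
    (q : Fin n → R) :
    (∏ i : Fin n, q i) *
      (∏ i : Fin n, ∏ j ∈ Finset.univ.filter (fun j => i < j), (q i - q j)) *
      (∏ i : Fin n, ∏ j ∈ Finset.univ.filter (fun j => i ≤ j), (1 + q i * q j)) =
    ∑ᶠ (γ : Partn) (_ : γ.InC),
      ((∏ i : Fin n, q i) *
        (∏ i : Fin n, ∏ j ∈ Finset.univ.filter (fun j => i < j), (q i - q j))) *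
        schur q γ := by
  have hfin : ∀ F : Partn → R, (∀ p : Partn, n < p.len → F p = 0) →
      ∑ᶠ (γ : Partn) (_ : γ.InC), F γ = ∑ p ∈ CP n, F p := by
    intro F hF
    apply finsum_mem_eq_sum_of_inter_support_eq
    ext p
    simp only [Set.mem_inter_iff, Function.mem_support, Finset.mem_coe, mem_CP]
    constructor
    · rintro ⟨h1, h2⟩
      refine ⟨⟨h1, ?_⟩, h2⟩
      by_contra h3
      exact h2 (hF p (by omega))
    · rintro ⟨h1, h2⟩
      exact ⟨h1.1, h2⟩
  rw [hfin _ (fun p hp => by rw [schur_eq_zero q p hp, mul_zero])]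
  rw [mul_assoc, main_sum, Finset.mul_sum]
  simp only [mul_assoc]
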